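/- Let F : [0,1] → ℝ be a nonnegative function with F(t) > 0 for t ∈ (0,1], with sup over pairs s,t with 1 ≤ t/s ≤ 2 of F(t)/F(s) finite, and suppose that for some δ > 0 the map t ↦ F(t)/t^δ is increasing. Let Z be a nonnegative submartingale with càdlàg sample paths such that E[Z_t] ≤ F(t) for all t ∈ [0,1]. Then for every N ∈ ℕ (including 0) and every t ∈ [2^{-(N+1)}, 2^{-N}], the probability P(∃ s ∈ (0,t], Z_s > F(s)/s^δ) is at most (sup_{1 ≤ t/s ≤ 2} F(t)/F(s)) · 1/(2^{(N+1)δ}(1 - 2^{-δ})). -/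

import Mathlib

open MeasureTheory

/-- Sampling a submartingale along a monotone sequence of times. -/
lemma sampled_submartingale {Ω : Type*} {m : MeasurableSpace Ω} {μ : Measure Ω}
    {ℱ : Filtration ℝ m} {Z : ℝ → Ω → ℝ} (hsub : Submartingale Z ℱ μ)
    (τ : ℕ → ℝ) (hτ : Monotone τ) :
    Submartingale (fun i => Z (τ i))
      (⟨fun i => ℱ (τ i), fun _ _ h => ℱ.mono (hτ h), fun i => ℱ.le (τ i)⟩ : Filtration ℕ m) μ :=
  ⟨fun i => hsub.1 (τ i), fun i j h => hsub.2.1 _ _ (hτ h), fun i => hsub.2.2 _⟩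

/-- Doob's maximal inequality along a finite monotone family of times. -/
lemma sampled_maximal {Ω : Type*} {m : MeasurableSpace Ω} {μ : Measure Ω}
    [IsProbabilityMeasure μ]
    {ℱ : Filtration ℝ m} {Z : ℝ → Ω → ℝ} (hsub : Submartingale Z ℱ μ)
    (hZnn : ∀ t ω, 0 ≤ Z t ω)
    (τ : ℕ → ℝ) (hτ : Monotone τ) (n : ℕ) (l : ℝ) (hl : 0 < l) :
    μ {ω | ∃ i ≤ n, l < Z (τ i) ω} ≤ ENNReal.ofReal ((∫ ω, Z (τ n) ω ∂μ) / l) := by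
  have h := maximal_ineq (sampled_submartingale hsub τ hτ) (fun i ω => hZnn _ ω)
    (ε := ⟨l, hl.le⟩) n
  set S := {ω | ((⟨l, hl.le⟩ : NNReal) : ℝ) ≤ (Finset.range (n + 1)).sup'
    Finset.nonempty_range_add_one fun k => Z (τ k) ω} with hS
  have hsubset : {ω | ∃ i ≤ n, l < Z (τ i) ω} ⊆ S := by
    rintro ω ⟨i, hi, hlt⟩
    rw [hS, Set.mem_ofPred_eq, Finset.le_sup'_iff]
    exact ⟨i, Finset.mem_range.2 (by omega), hlt.le⟩
  have hint : ∫ ω in S, Z (τ n) ω ∂μ ≤ ∫ ω, Z (τ n) ω ∂μ :=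
    setIntegral_le_integral (hsub.2.2 _) (Filter.Eventually.of_forall fun ω => hZnn _ ω)
  have h2 : ENNReal.ofReal l * μ S ≤ ENNReal.ofReal (∫ ω, Z (τ n) ω ∂μ) := by
    rw [ENNReal.ofReal_eq_coe_nnreal hl.le]
    exact h.trans (ENNReal.ofReal_le_ofReal hint)
  refine (measure_mono hsubset).trans ?_
  rw [ENNReal.ofReal_div_of_pos hl, ENNReal.le_div_iff_mul_le
    (Or.inl (by simpa using hl)) (Or.inl ENNReal.ofReal_ne_top), mul_comm]
  exact h2

/-- Doob's maximal inequality in continuous time on `[a, b]`, for right-continuous paths. -/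
lemma cont_maximal {Ω : Type*} {m : MeasurableSpace Ω} {μ : Measure Ω}
    [IsProbabilityMeasure μ]
    {ℱ : Filtration ℝ m} {Z : ℝ → Ω → ℝ} (hsub : Submartingale Z ℱ μ)
    (hZnn : ∀ t ω, 0 ≤ Z t ω)
    (hrc : ∀ ω, ∀ t : ℝ, ContinuousWithinAt (fun s => Z s ω) (Set.Ici t) t)
    (a b : ℝ) (hab : a < b) (l : ℝ) (hl : 0 < l) :
    μ {ω | ∃ s ∈ Set.Icc a b, l < Z s ω} ≤ ENNReal.ofReal ((∫ ω, Z b ω ∂μ) / l) := by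
  have hd : 0 < b - a := sub_pos.2 hab
  let τ : ℕ → ℕ → ℝ := fun n i => a + (b - a) * (i / 2 ^ n)
  have hτ : ∀ n, Monotone (τ n) := by
    intro n i j hij
    have : (i : ℝ) ≤ j := by exact_mod_cast hij
    simp only [τ]
    gcongr
  have hend : ∀ n, τ n (2 ^ n) = b := by
    intro n; simp [τ]
  let A : ℕ → Set Ω := fun n => {ω | ∃ i ≤ 2 ^ n, l < Z (τ n i) ω}
  have hA : Monotone A := by
    apply monotone_nat_of_le_succ
    rintro n ω ⟨i, hi, h⟩
    refine ⟨2 * i, by rw [pow_succ]; omega, ?_⟩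
    have : τ (n + 1) (2 * i) = τ n i := by
      simp only [τ]; push_cast; rw [pow_succ]; field_simp
    rwa [this]
  have hcover : {ω | ∃ s ∈ Set.Icc a b, l < Z s ω} ⊆ ⋃ n, A n := by
    rintro ω ⟨s, ⟨has, hsb⟩, h⟩
    rw [Set.mem_iUnion]
    have hev := (hrc ω s).eventually (lt_mem_nhds h)
    rw [Filter.Eventually, Metric.mem_nhdsWithin_iff] at hev
    obtain ⟨ε, hε, hball⟩ := hev
    obtain ⟨n, hn⟩ := exists_pow_lt_of_lt_one (div_pos hε hd) (by norm_num : (1 / 2 : ℝ) < 1)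
    have h2 : (0 : ℝ) < 2 ^ n := by positivity
    have hx0 : 0 ≤ (s - a) / (b - a) * 2 ^ n :=
      mul_nonneg (div_nonneg (by linarith) hd.le) h2.le
    refine ⟨n, ⌈(s - a) / (b - a) * 2 ^ n⌉₊, ?_, ?_⟩
    · rw [Nat.ceil_le]
      push_cast
      have : (s - a) / (b - a) ≤ 1 := by rw [div_le_one hd]; linarith
      nlinarith
    · have h3 := Nat.le_ceil ((s - a) / (b - a) * 2 ^ n)
      have h4 := Nat.ceil_lt_add_one hx0
      set k : ℝ := (⌈(s - a) / (b - a) * 2 ^ n⌉₊ : ℝ) with hk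
      have h5 : s ≤ a + (b - a) * (k / 2 ^ n) := by
        have : (s - a) / (b - a) ≤ k / 2 ^ n := by rwa [le_div_iff₀ h2]
        rw [div_le_iff₀ hd] at this
        linarith
      have h6 : a + (b - a) * (k / 2 ^ n) < s + ε := by
        have e1 : k / 2 ^ n < (s - a) / (b - a) + (1 / 2) ^ n := by
          rw [div_lt_iff₀ h2, add_mul, one_div, inv_pow, inv_mul_cancel₀ h2.ne']
          exact h4
        have e2 : k / 2 ^ n < (s - a) / (b - a) + ε / (b - a) := by linarith
        rw [← add_div, lt_div_iff₀ hd] at e2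
        linarith
      apply hball
      refine ⟨?_, h5⟩
      rw [Metric.mem_ball, Real.dist_eq, abs_lt]
      constructor <;> linarith
  refine (measure_mono hcover).trans ?_
  rw [hA.measure_iUnion]
  refine iSup_le fun n => ?_
  have := sampled_maximal hsub hZnn (τ n) (hτ n) (2 ^ n) l hl
  rwa [hend] at this

theorem stmt1 {Ω : Type*} [m : MeasurableSpace Ω] (μ : Measure Ω) [IsProbabilityMeasure μ]
    (ℱ : Filtration ℝ m) (Z : ℝ → Ω → ℝ) (F : ℝ → ℝ) (δ C : ℝ) (hδ : 0 < δ)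
    (hFnn : ∀ t ∈ Set.Icc (0:ℝ) 1, 0 ≤ F t)
    (hFpos : ∀ t ∈ Set.Ioc (0:ℝ) 1, 0 < F t)
    (hC : ∀ s t : ℝ, 0 < s → s ≤ t → t ≤ 2 * s → t ≤ 1 → F t / F s ≤ C)
    (hmono : MonotoneOn (fun t => F t / t ^ δ) (Set.Ioc (0:ℝ) 1))
    (hsub : Submartingale Z ℱ μ)
    (hZnn : ∀ t ω, 0 ≤ Z t ω)
    (hcadlag : ∀ ω, ∀ t : ℝ,
      ContinuousWithinAt (fun s => Z s ω) (Set.Ici t) t ∧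
      ∃ l : ℝ, Filter.Tendsto (fun s => Z s ω) (nhdsWithin t (Set.Iio t)) (nhds l))
    (hmean : ∀ t ∈ Set.Icc (0:ℝ) 1, ∫ ω, Z t ω ∂μ ≤ F t) :
    ∀ N : ℕ, ∀ t ∈ Set.Icc ((1:ℝ) / 2 ^ (N + 1)) ((1:ℝ) / 2 ^ N),
      μ {ω | ∃ s ∈ Set.Ioc (0:ℝ) t, F s / s ^ δ < Z s ω} ≤
        ENNReal.ofReal (C / ((2:ℝ) ^ (((N:ℝ) + 1) * δ) * (1 - (2:ℝ) ^ (-δ)))) := by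
  intro N t ht
  have ht0 : 0 < t := lt_of_lt_of_le (by positivity) ht.1
  have ht1 : t ≤ 1 := ht.2.trans (by
    rw [div_le_one (by positivity)]; exact one_le_pow₀ (by norm_num))
  have hCpos : 0 < C := by
    have h1 := hC 1 1 one_pos le_rfl (by norm_num) le_rfl
    have h2 := hFpos 1 ⟨one_pos, le_rfl⟩
    rw [div_self h2.ne'] at h1
    linarith
  set q : ℝ := (2:ℝ) ^ (-δ) with hq
  have hq0 : 0 < q := by positivity
  have hq1 : q < 1 := Real.rpow_lt_one_of_one_lt_of_neg (by norm_num) (by linarith)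
  let b : ℕ → ℝ := fun k => t / 2 ^ k
  have hb0 : ∀ k, 0 < b k := fun k => by positivity
  have hbs : ∀ k, b k = 2 * b (k + 1) := fun k => by
    simp only [b]; rw [pow_succ]; field_simp
  have hb1 : ∀ k, b k ≤ 1 := fun k =>
    (div_le_self ht0.le (one_le_pow₀ (by norm_num))).trans ht1
  have hbq : ∀ k, b k ^ δ = t ^ δ * q ^ k := by
    intro k
    simp only [b]
    rw [Real.div_rpow ht0.le (by positivity), hq, ← Real.rpow_natCast, ← Real.rpow_natCast,
      ← Real.rpow_mul (by norm_num), ← Real.rpow_mul (by norm_num), div_eq_mul_inv,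
      ← Real.rpow_neg (by norm_num)]
    congr 2; ring
  have htq : t ^ δ ≤ q ^ N := by
    have h1 : t ^ δ ≤ ((1:ℝ) / 2 ^ N) ^ δ := Real.rpow_le_rpow ht0.le ht.2 hδ.le
    refine h1.trans (le_of_eq ?_)
    rw [Real.div_rpow (by norm_num) (by positivity), hq, ← Real.rpow_natCast,
      ← Real.rpow_natCast, Real.one_rpow,
      ← Real.rpow_mul (by norm_num), ← Real.rpow_mul (by norm_num), one_div,
      ← Real.rpow_neg (by norm_num)]
    congr 1; ring
  have hcover : {ω | ∃ s ∈ Set.Ioc (0:ℝ) t, F s / s ^ δ < Z s ω} ⊆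
      ⋃ k, {ω | ∃ s ∈ Set.Icc (b (k + 1)) (b k), F (b (k + 1)) / b (k + 1) ^ δ < Z s ω} := by
    rintro ω ⟨s, ⟨hs0, hst⟩, h⟩
    have hex : ∃ k, b (k + 1) ≤ s := by
      obtain ⟨n, hn⟩ := exists_pow_lt_of_lt_one (div_pos hs0 ht0) (by norm_num : (1 / 2 : ℝ) < 1)
      have h0 : b n ≤ s := by
        rw [lt_div_iff₀ ht0] at hn
        have : b n = (1 / 2) ^ n * t := by
          simp only [b]; rw [one_div, inv_pow]; ring
        linarith
      exact ⟨n, by have := hbs n; have := hb0 (n + 1); linarith⟩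
    classical
    have hk := Nat.find_spec hex
    have hmin : s ≤ b (Nat.find hex) := by
      rcases Nat.eq_zero_or_pos (Nat.find hex) with h0 | h0
      · rw [h0]; simpa [b] using hst
      · have := Nat.find_min hex (m := Nat.find hex - 1) (by omega)
        rw [Nat.sub_add_cancel h0] at this
        exact (not_le.1 this).le
    rw [Set.mem_iUnion]
    refine ⟨Nat.find hex, s, ⟨hk, hmin⟩, lt_of_le_of_lt ?_ h⟩
    exact hmono ⟨hb0 _, hb1 _⟩ ⟨hs0, hst.trans ht1⟩ hk
  have hterm : ∀ k, μ {ω | ∃ s ∈ Set.Icc (b (k + 1)) (b k),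
      F (b (k + 1)) / b (k + 1) ^ δ < Z s ω} ≤ ENNReal.ofReal (C * q ^ (N + 1) * q ^ k) := by
    intro k
    have hF := hFpos (b (k + 1)) ⟨hb0 _, hb1 _⟩
    have hbp : 0 < b (k + 1) ^ δ := Real.rpow_pos_of_pos (hb0 _) _
    have hlt : b (k + 1) < b k := by have := hbs k; have := hb0 (k + 1); linarith
    refine (cont_maximal hsub hZnn (fun ω t => (hcadlag ω t).1) _ _ hlt _
      (div_pos hF hbp)).trans (ENNReal.ofReal_le_ofReal ?_)
    calc (∫ ω, Z (b k) ω ∂μ) / (F (b (k + 1)) / b (k + 1) ^ δ)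
        ≤ F (b k) / (F (b (k + 1)) / b (k + 1) ^ δ) := by
          have := hmean (b k) ⟨(hb0 k).le, hb1 k⟩
          gcongr
      _ = F (b k) / F (b (k + 1)) * b (k + 1) ^ δ := by field_simp
      _ ≤ C * b (k + 1) ^ δ := by
          have := hC (b (k + 1)) (b k) (hb0 _) hlt.le (hbs k).le (hb1 k)
          gcongr
      _ = C * (t ^ δ * q ^ (k + 1)) := by rw [hbq]
      _ ≤ C * (q ^ N * q ^ (k + 1)) := by gcongr
      _ = C * q ^ (N + 1) * q ^ k := by ring
  refine (measure_mono hcover).trans ((measure_iUnion_le _).trans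
    ((ENNReal.tsum_le_tsum hterm).trans (le_of_eq ?_)))
  rw [← ENNReal.ofReal_tsum_of_nonneg (fun k => by positivity)
    ((summable_geometric_of_lt_one hq0.le hq1).mul_left _), tsum_mul_left,
    tsum_geometric_of_lt_one hq0.le hq1]
  congr 1
  have hqN : q ^ (N + 1) = ((2:ℝ) ^ (((N:ℝ) + 1) * δ))⁻¹ := by
    rw [hq, ← Real.rpow_natCast, ← Real.rpow_mul (by norm_num), ← Real.rpow_neg (by norm_num)]
    congr 1; push_cast; ring
  rw [hqN, div_eq_mul_inv, mul_inv, mul_assoc]
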